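/- Let d ≥ 1, let r be a real number with 0 ≤ r < 1, and let f ∈ C^r(ℤ_p^d, E). For m ≥ 0 define the locally constant function f_m = Σ_{j ∈ {0,1,…,p^m−1}^d} f(j) · 1_{j + p^m ℤ_p^d}. Then v_{C^r}(f − f_m) → ∞ as m → ∞; in particular the space LC(ℤ_p^d, E) of locally constant functions is dense in C^r(ℤ_p^d, E). -/

import Mathlib

open Filter Topology

/-- `p^{-ε_m(f)}`: the supremum of `‖f (x+y) - f x‖` over `x ∈ ℤ_p^d` and `y ∈ p^m ℤ_p^d`. -/
noncomputable def supDiff {p : ℕ} [Fact p.Prime] (E : Type*) [NormedField E] {d : ℕ}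
    (f : (Fin d → ℤ_[p]) → E) (m : ℕ) : ℝ :=
  ⨆ x : Fin d → ℤ_[p], ⨆ z : Fin d → ℤ_[p], ‖f (x + (p : ℤ_[p]) ^ m • z) - f x‖

/-- `f ∈ C^r(ℤ_p^d, E)`. -/
def MemCr {p : ℕ} [Fact p.Prime] (E : Type*) [NormedField E] {d : ℕ} (r : ℝ)
    (f : (Fin d → ℤ_[p]) → E) : Prop :=
  Continuous f ∧
    Tendsto (fun m : ℕ => supDiff E f m * (p : ℝ) ^ (r * (m : ℝ))) atTop (nhds 0)

/-- The norm `‖f‖_{C^r} = p^{-v_{C^r}(f)}`. -/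
noncomputable def CrNorm {p : ℕ} [Fact p.Prime] (E : Type*) [NormedField E] {d : ℕ} (r : ℝ)
    (f : (Fin d → ℤ_[p]) → E) : ℝ :=
  max (⨆ x : Fin d → ℤ_[p], ‖f x‖) (⨆ m : ℕ, supDiff E f m * (p : ℝ) ^ (r * (m : ℝ)))

/-- The locally constant truncation
`f_m = Σ_{j ∈ {0,…,p^m-1}^d} f(j) · 1_{j + p^m ℤ_p^d}`. -/
noncomputable def truncation {p : ℕ} [Fact p.Prime] (E : Type*) [NormedField E] {d : ℕ}
    (f : (Fin d → ℤ_[p]) → E) (m : ℕ) : (Fin d → ℤ_[p]) → E :=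
  fun x => ∑ j : Fin d → Fin (p ^ m),
    Set.indicator
      {y : Fin d → ℤ_[p] | ∃ z : Fin d → ℤ_[p],
        y = (fun i => ((j i : ℕ) : ℤ_[p])) + (p : ℤ_[p]) ^ m • z}
      (fun _ => f (fun i => ((j i : ℕ) : ℤ_[p]))) x

/-!
On a coset of `p ^ m ℤ_p^d` the truncation `f_m` is constant, equal to the value of `f` at the
representative with coordinates in `{0, …, p ^ m - 1}`; so `‖f - f_m‖ ≤ supDiff f m` pointwise.
For `n ≥ m`, a translation in `p ^ n ℤ_p^d` does not change `f_m`, so `f - f_m` and `f` have the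
same `supDiff` at level `n`. For `n ≤ m`, the pointwise bound gives
`supDiff (f - f_m) n * p ^ (r n) ≤ 2 * supDiff f m * p ^ (r m)`. Hence the `C^r` norm of `f - f_m`
is at most twice the supremum of `supDiff f n * p ^ (r n)` over `n ≥ m`, which tends to `0`.
-/

section CosetRepresentatives

variable {p : ℕ} [Fact p.Prime] {ι : Type*}

lemma padicAppr_eq_iff_dvd {x : ℤ_[p]} {m k : ℕ} (hk : k < p ^ m) :
    x.appr m = k ↔ (p : ℤ_[p]) ^ m ∣ x - k := by
  rw [← Ideal.mem_span_singleton]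
  refine ⟨fun h => h ▸ x.appr_spec m, fun h => ?_⟩
  have hcongr : x.appr m ≡ k [MOD p ^ m] :=
    (ZMod.natCast_eq_natCast_iff _ _ _).1
      (PadicInt.zmod_congr_of_sub_mem_span m x _ _ (x.appr_spec m) h)
  exact hcongr.eq_of_lt_of_lt (x.appr_lt m) hk

lemma padicAppr_eq_of_dvd_sub {x y : ℤ_[p]} {m : ℕ} (h : (p : ℤ_[p]) ^ m ∣ y - x) :
    y.appr m = x.appr m := by
  rw [padicAppr_eq_iff_dvd (x.appr_lt m), ← sub_add_sub_cancel y x]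
  exact dvd_add h (Ideal.mem_span_singleton.1 (x.appr_spec m))

lemma isLocallyConstant_padicAppr (m : ℕ) : IsLocallyConstant fun x : ℤ_[p] => x.appr m := by
  refine (IsLocallyConstant.iff_eventually_eq _).2 fun x => ?_
  have hp : (0 : ℝ) < p := mod_cast (Fact.out : p.Prime).pos
  filter_upwards [Metric.closedBall_mem_nhds x (zpow_pos hp (-m : ℤ))] with y hy
  rw [mem_closedBall_iff_norm, PadicInt.norm_le_pow_iff_mem_span_pow,
    Ideal.mem_span_singleton] at hy
  exact padicAppr_eq_of_dvd_sub hy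

/-- The representative of the coset `x + p ^ m ℤ_p^ι` all of whose coordinates are natural numbers
less than `p ^ m`; these are the points `j` at which `truncation` samples its argument. -/
noncomputable def cosetRep (m : ℕ) (x : ι → ℤ_[p]) : ι → ℤ_[p] :=
  fun i => (x i).appr m

lemma exists_eq_cosetRep_add (m : ℕ) (x : ι → ℤ_[p]) :
    ∃ z : ι → ℤ_[p], x = cosetRep m x + (p : ℤ_[p]) ^ m • z := by
  choose z hz using fun i => Ideal.mem_span_singleton.1 ((x i).appr_spec m)
  exact ⟨z, funext fun i => sub_eq_iff_eq_add'.1 (hz i)⟩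

lemma cosetRep_add_pow_smul {m n : ℕ} (hmn : m ≤ n) (x z : ι → ℤ_[p]) :
    cosetRep m (x + (p : ℤ_[p]) ^ n • z) = cosetRep m x := by
  funext i
  have hdvd : (p : ℤ_[p]) ^ m ∣ (x + (p : ℤ_[p]) ^ n • z) i - x i := by
    simpa using (pow_dvd_pow _ hmn).mul_right (z i)
  exact congrArg Nat.cast (padicAppr_eq_of_dvd_sub hdvd)

lemma isLocallyConstant_cosetRep [Finite ι] (m : ℕ) :
    IsLocallyConstant (cosetRep m : (ι → ℤ_[p]) → ι → ℤ_[p]) := by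
  refine (IsLocallyConstant.iff_eventually_eq _).2 fun x => ?_
  have hcoord : ∀ᶠ y in 𝓝 x, ∀ i, (y i).appr m = (x i).appr m := eventually_all.2 fun i =>
    (continuous_apply i).continuousAt.eventually
      ((isLocallyConstant_padicAppr m).eventually_eq (x i))
  filter_upwards [hcoord] with y hy
  exact funext fun i => congrArg Nat.cast (hy i)

lemma exists_eq_natCast_add_iff {m : ℕ} {j : ι → Fin (p ^ m)} {x : ι → ℤ_[p]} :
    (∃ z : ι → ℤ_[p], x = (fun i => ((j i : ℕ) : ℤ_[p])) + (p : ℤ_[p]) ^ m • z) ↔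
      j = fun i => ⟨(x i).appr m, (x i).appr_lt m⟩ := by
  calc
    _ ↔ ∀ i, (p : ℤ_[p]) ^ m ∣ x i - (j i : ℕ) := by
      simp only [funext_iff, Pi.add_apply, Pi.smul_apply, smul_eq_mul, dvd_def,
        sub_eq_iff_eq_add', Classical.skolem]
    _ ↔ ∀ i, (x i).appr m = j i := forall_congr' fun i => (padicAppr_eq_iff_dvd (j i).2).symm
    _ ↔ _ := by simp only [funext_iff, Fin.ext_iff, eq_comm]

end CosetRepresentatives

section Truncation

variable {p : ℕ} [Fact p.Prime] {E : Type*} [NormedField E] {d : ℕ} {f : (Fin d → ℤ_[p]) → E}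

lemma truncation_eq_comp_cosetRep (f : (Fin d → ℤ_[p]) → E) (m : ℕ) :
    truncation E f m = f ∘ cosetRep m := by
  classical
  funext x
  simp only [truncation, Set.indicator_apply, Set.mem_ofPred_eq, exists_eq_natCast_add_iff,
    Finset.sum_ite_eq', Finset.mem_univ, if_true]
  rfl

lemma isLocallyConstant_truncation (f : (Fin d → ℤ_[p]) → E) (m : ℕ) :
    IsLocallyConstant (truncation E f m) :=
  truncation_eq_comp_cosetRep f m ▸ (isLocallyConstant_cosetRep m).comp f

lemma supDiff_nonneg (f : (Fin d → ℤ_[p]) → E) (m : ℕ) : 0 ≤ supDiff E f m :=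
  Real.iSup_nonneg fun _ => Real.iSup_nonneg fun _ => norm_nonneg _

lemma norm_sub_le_supDiff (hf : Bornology.IsBounded (Set.range f)) (m : ℕ)
    (x z : Fin d → ℤ_[p]) : ‖f (x + (p : ℤ_[p]) ^ m • z) - f x‖ ≤ supDiff E f m := by
  have hdiam (x z : Fin d → ℤ_[p]) :
      ‖f (x + (p : ℤ_[p]) ^ m • z) - f x‖ ≤ Metric.diam (Set.range f) :=
    (dist_eq_norm _ _).symm.trans_le (Metric.dist_le_diam_of_mem hf ⟨_, rfl⟩ ⟨_, rfl⟩)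
  calc
    ‖f (x + (p : ℤ_[p]) ^ m • z) - f x‖ ≤ ⨆ z, ‖f (x + (p : ℤ_[p]) ^ m • z) - f x‖ :=
      le_ciSup (f := fun z => ‖f (x + (p : ℤ_[p]) ^ m • z) - f x‖)
        ⟨_, Set.forall_mem_range.2 (hdiam x)⟩ z
    _ ≤ supDiff E f m :=
      le_ciSup (f := fun x => ⨆ z, ‖f (x + (p : ℤ_[p]) ^ m • z) - f x‖)
        ⟨_, Set.forall_mem_range.2 fun x => ciSup_le (hdiam x)⟩ x

lemma supDiff_le_two_mul {B : ℝ} (hf : ∀ x, ‖f x‖ ≤ B) (n : ℕ) : supDiff E f n ≤ 2 * B :=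
  ciSup_le fun x => ciSup_le fun z =>
    (norm_sub_le_of_le (hf (x + (p : ℤ_[p]) ^ n • z)) (hf x)).trans_eq (two_mul B).symm

lemma norm_sub_truncation_le (hf : Bornology.IsBounded (Set.range f)) (m : ℕ)
    (x : Fin d → ℤ_[p]) : ‖(f - truncation E f m) x‖ ≤ supDiff E f m := by
  obtain ⟨z, hz⟩ := exists_eq_cosetRep_add m x
  have hle := norm_sub_le_supDiff hf m (cosetRep m x) z
  rw [truncation_eq_comp_cosetRep]
  rwa [← hz] at hle

lemma supDiff_sub_truncation {m n : ℕ} (hmn : m ≤ n) (f : (Fin d → ℤ_[p]) → E) :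
    supDiff E (f - truncation E f m) n = supDiff E f n := by
  simp only [supDiff, truncation_eq_comp_cosetRep, Pi.sub_apply, Function.comp_apply,
    cosetRep_add_pow_smul hmn, sub_sub_sub_cancel_right]

lemma supDiff_sub_truncation_mul_rpow_le {r B : ℝ} (hr : 0 ≤ r)
    (hf : Bornology.IsBounded (Set.range f)) {m : ℕ}
    (hB : ∀ n ≥ m, supDiff E f n * (p : ℝ) ^ (r * n) ≤ B) (n : ℕ) :
    supDiff E (f - truncation E f m) n * (p : ℝ) ^ (r * n) ≤ 2 * B := by
  rcases le_total m n with hmn | hnm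
  · have hB0 : 0 ≤ B :=
      (mul_nonneg (supDiff_nonneg f n) (by positivity)).trans (hB n hmn)
    rw [supDiff_sub_truncation hmn]
    linarith [hB n hmn]
  · have hp : (1 : ℝ) ≤ p := mod_cast (Fact.out : p.Prime).one_le
    calc
      supDiff E (f - truncation E f m) n * (p : ℝ) ^ (r * n)
          ≤ (2 * supDiff E f m) * (p : ℝ) ^ (r * m) := by
        have := supDiff_nonneg f m
        gcongr
        exact supDiff_le_two_mul (norm_sub_truncation_le hf m) n
      _ ≤ 2 * B := by linarith [hB m le_rfl]

lemma CrNorm_nonneg (r : ℝ) (f : (Fin d → ℤ_[p]) → E) : 0 ≤ CrNorm E r f :=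
  le_max_of_le_left (Real.iSup_nonneg fun _ => norm_nonneg _)

lemma CrNorm_sub_truncation_le {r B : ℝ} (hr : 0 ≤ r) (hf : Bornology.IsBounded (Set.range f))
    {m : ℕ} (hB : ∀ n ≥ m, supDiff E f n * (p : ℝ) ^ (r * n) ≤ B) :
    CrNorm E r (f - truncation E f m) ≤ 2 * B := by
  have hp : (1 : ℝ) ≤ p := mod_cast (Fact.out : p.Prime).one_le
  refine max_le (ciSup_le fun x => ?_)
    (ciSup_le (supDiff_sub_truncation_mul_rpow_le hr hf hB))
  have hsup : supDiff E f m ≤ B :=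
    (le_mul_of_one_le_right (supDiff_nonneg f m)
      (Real.one_le_rpow hp (by positivity))).trans (hB m le_rfl)
  linarith [norm_sub_truncation_le hf m x, supDiff_nonneg f m]

lemma MemCr.tendsto_CrNorm_sub_truncation {r : ℝ} (hr : 0 ≤ r) (hf : MemCr E r f) :
    Tendsto (fun m => CrNorm E r (f - truncation E f m)) atTop (𝓝 0) := by
  refine tendsto_order.2
    ⟨fun a ha => Eventually.of_forall fun m => ha.trans_le (CrNorm_nonneg r _), fun ε hε => ?_⟩
  have htail : ∀ᶠ m in atTop, ∀ n ≥ m, supDiff E f n * (p : ℝ) ^ (r * n) < ε / 3 :=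
    eventually_forall_ge_atTop.2 (hf.2.eventually_lt_const (by positivity))
  filter_upwards [htail] with m hm
  calc
    CrNorm E r (f - truncation E f m) ≤ 2 * (ε / 3) :=
      CrNorm_sub_truncation_le hr (isCompact_range hf.1).isBounded fun n hn => (hm n hn).le
    _ < ε := by linarith

end Truncation

theorem stmt3_general {p : ℕ} [Fact p.Prime] {E : Type*} [NormedField E] {d : ℕ} {r : ℝ}
    (hr : 0 ≤ r) {f : (Fin d → ℤ_[p]) → E} (hf : MemCr E r f) :
    Tendsto (fun m : ℕ => CrNorm E r (f - truncation E f m)) atTop (𝓝 0) ∧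
    ∀ ε : ℝ, 0 < ε → ∃ g : (Fin d → ℤ_[p]) → E,
      IsLocallyConstant g ∧ CrNorm E r (f - g) < ε := by
  have hlim := hf.tendsto_CrNorm_sub_truncation hr
  refine ⟨hlim, fun ε hε => ?_⟩
  obtain ⟨m, hm⟩ := (hlim.eventually_lt_const hε).exists
  exact ⟨truncation E f m, isLocallyConstant_truncation f m, hm⟩

/-- For `d ≥ 1`, `0 ≤ r < 1` and `f ∈ C^r(ℤ_p^d, E)`, the locally constant
truncations `f_m = Σ_j f(j)·1_{j + p^m ℤ_p^d}` satisfy `v_{C^r}(f - f_m) → ∞`, i.e.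
`‖f - f_m‖_{C^r} → 0`; in particular the locally constant functions are dense in
`C^r(ℤ_p^d, E)`. -/
theorem stmt3 (p : ℕ) [Fact p.Prime] (E : Type*) [NormedField E] [CompleteSpace E]
    [IsUltrametricDist E] [Algebra ℚ_[p] E] [FiniteDimensional ℚ_[p] E]
    (hE : ∀ x : ℚ_[p], ‖algebraMap ℚ_[p] E x‖ = ‖x‖)
    (d : ℕ) (hd : 1 ≤ d) (r : ℝ) (hr0 : 0 ≤ r) (hr1 : r < 1)
    (f : (Fin d → ℤ_[p]) → E) (hf : MemCr E r f) :
    Tendsto (fun m : ℕ => CrNorm E r (f - truncation E f m)) atTop (nhds 0) ∧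
    ∀ ε : ℝ, 0 < ε → ∃ g : (Fin d → ℤ_[p]) → E,
      IsLocallyConstant g ∧ CrNorm E r (f - g) < ε := by
  exact stmt3_general hr0 hf
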